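/- arXiv:2409.13680 — 3 statements merged into one kernel-verified Lean document; each statement's English description precedes it below -/
import Mathlib

section
/- Let a_1,...,a_s and b_1,...,b_s be positive real numbers. Then (1/2) * ( (Σ_{i=1}^s a_i^3 / b_i) * (Σ_{i=1}^s b_i^3 / a_i) - (Σ_{i=1}^s a_i b_i)^2 ) ≥ (Σ_{i=1}^s a_i^2) * (Σ_{i=1}^s b_i^2) - (Σ_{i=1}^s a_i b_i)^2 ≥ 0. -/
/-!
With `w i = a i * b i` and `r i = a i / b i`, the sums of `a ^ 3 / b`, `a ^ 2`, `a * b`, `b ^ 2`,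
`b ^ 3 / a` are the sums of `w * r ^ k` for `k = 2, 1, 0, -1, -2`. Symmetrizing the products of
sums, the first inequality can be compared pair by pair: divided by `w i * w j`, the terms of the
pair `(i, j)` satisfy it because `v ^ 2 ≥ 2 * v`, where `v = u + u⁻¹ ≥ 2` and `u = r i / r j`.
Clearing denominators, `u = x / y` with `x = a i * b j` and `y = b i * a j`. The second inequality
is Cauchy–Schwarz.
-/

lemma two_mul_sum_mul_sum_eq_sum_sum_add {ι R : Type*} [CommSemiring R] (t : Finset ι)
    (f g : ι → R) :
    2 * ((∑ i ∈ t, f i) * ∑ i ∈ t, g i) = ∑ i ∈ t, ∑ j ∈ t, (f i * g j + g i * f j) := by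
  simp only [Finset.sum_add_distrib, ← Finset.sum_mul_sum]
  ring

section LinearOrderedField

variable {ι K : Type*} [Field K] [LinearOrder K] [IsStrictOrderedRing K]

lemma two_mul_sq_add_sq_le_of_mul_pos {x y : K} (hxy : 0 < x * y) :
    2 * (x ^ 2 + y ^ 2) ≤ x ^ 3 / y + y ^ 3 / x + 2 * (x * y) := by
  have hx : x ≠ 0 := left_ne_zero_of_mul hxy.ne'
  have hy : y ≠ 0 := right_ne_zero_of_mul hxy.ne'
  calc
    2 * (x ^ 2 + y ^ 2) ≤ (x ^ 2 + y ^ 2) ^ 2 / (x * y) := by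
      rw [le_div_iff₀ hxy]
      calc
        2 * (x ^ 2 + y ^ 2) * (x * y) = 2 * x * y * (x ^ 2 + y ^ 2) := by ring
        _ ≤ (x ^ 2 + y ^ 2) * (x ^ 2 + y ^ 2) := by gcongr; exact two_mul_le_add_sq x y
        _ = (x ^ 2 + y ^ 2) ^ 2 := (sq _).symm
    _ = x ^ 3 / y + y ^ 3 / x + 2 * (x * y) := by
      field_simp
      ring

lemma two_mul_sum_sq_mul_sum_sq_le {t : Finset ι} {a b : ι → K}
    (hab : ∀ i ∈ t, 0 < a i * b i) :
    2 * ((∑ i ∈ t, a i ^ 2) * ∑ i ∈ t, b i ^ 2) ≤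
      (∑ i ∈ t, a i ^ 3 / b i) * (∑ i ∈ t, b i ^ 3 / a i) + (∑ i ∈ t, a i * b i) ^ 2 := by
  have pair_le : ∀ i ∈ t, ∀ j ∈ t, 2 * (a i ^ 2 * b j ^ 2 + b i ^ 2 * a j ^ 2) ≤
      (a i ^ 3 / b i * (b j ^ 3 / a j) + b i ^ 3 / a i * (a j ^ 3 / b j)) +
        (a i * b i * (a j * b j) + a i * b i * (a j * b j)) := by
    intro i hi j hj
    have hpos : 0 < a i * b j * (b i * a j) := by
      convert mul_pos (hab i hi) (hab j hj) using 1
      ring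
    convert two_mul_sq_add_sq_le_of_mul_pos hpos using 1 <;> ring
  refine le_of_mul_le_mul_left ?_ (zero_lt_two : (0 : K) < 2)
  rw [mul_add, sq (∑ i ∈ t, a i * b i)]
  simp only [two_mul_sum_mul_sum_eq_sum_sum_add]
  simp only [Finset.mul_sum, ← Finset.sum_add_distrib]
  exact Finset.sum_le_sum fun i hi ↦ Finset.sum_le_sum (pair_le i hi)

theorem stmt0_general {t : Finset ι} {a b : ι → K} (hab : ∀ i ∈ t, 0 < a i * b i) :
    (1 / 2 : K) * ((∑ i ∈ t, a i ^ 3 / b i) * (∑ i ∈ t, b i ^ 3 / a i) -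
        (∑ i ∈ t, a i * b i) ^ 2) ≥
      (∑ i ∈ t, a i ^ 2) * (∑ i ∈ t, b i ^ 2) - (∑ i ∈ t, a i * b i) ^ 2 ∧
    (∑ i ∈ t, a i ^ 2) * (∑ i ∈ t, b i ^ 2) - (∑ i ∈ t, a i * b i) ^ 2 ≥ 0 := by
  constructor
  · linarith [two_mul_sum_sq_mul_sum_sq_le hab]
  · exact sub_nonneg_of_le (Finset.sum_mul_sq_le_sq_mul_sq t a b)

end LinearOrderedField

/-- If `a i` and `b i` (`i = 1, ..., s`) are positive real numbers, then
`(1/2) * ((∑ aᵢ³/bᵢ)(∑ bᵢ³/aᵢ) - (∑ aᵢbᵢ)²) ≥ (∑ aᵢ²)(∑ bᵢ²) - (∑ aᵢbᵢ)² ≥ 0`. -/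
theorem stmt0 (s : ℕ) (hs : 1 ≤ s) (a b : ℕ → ℝ)
    (ha : ∀ i ∈ Finset.Icc 1 s, 0 < a i) (hb : ∀ i ∈ Finset.Icc 1 s, 0 < b i) :
    (1 / 2 : ℝ) * ((∑ i ∈ Finset.Icc 1 s, (a i) ^ 3 / b i) *
        (∑ i ∈ Finset.Icc 1 s, (b i) ^ 3 / a i) - (∑ i ∈ Finset.Icc 1 s, a i * b i) ^ 2)
      ≥ (∑ i ∈ Finset.Icc 1 s, (a i) ^ 2) * (∑ i ∈ Finset.Icc 1 s, (b i) ^ 2) -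
        (∑ i ∈ Finset.Icc 1 s, a i * b i) ^ 2 ∧
    (∑ i ∈ Finset.Icc 1 s, (a i) ^ 2) * (∑ i ∈ Finset.Icc 1 s, (b i) ^ 2) -
        (∑ i ∈ Finset.Icc 1 s, a i * b i) ^ 2 ≥ 0 := by
  exact stmt0_general fun i hi ↦ mul_pos (ha i hi) (hb i hi)
end

section
/- Let G be a finite simple graph with n vertices and e edges, minimum degree δ ≥ 1, maximum degree Δ, and independence number β. Then Z₁(G) ≤ (n − β)·Δ² + e²/(2β) + β·Δ³/(2δ), with equality if and only if G is a regular balanced bipartite graph. -/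
open Finset

/-- The first Zagreb index of a graph: the sum of the squares of the vertex degrees. -/
def zagreb1 {V : Type*} [Fintype V] (G : SimpleGraph V) [DecidableRel G.Adj] : ℝ :=
  ∑ u, (G.degree u : ℝ) ^ 2

/-- The forgotten topological index of a graph: the sum of the cubes of the vertex degrees. -/
def forgottenIndex {V : Type*} [Fintype V] (G : SimpleGraph V) [DecidableRel G.Adj] : ℝ :=
  ∑ u, (G.degree u : ℝ) ^ 3

/-- The inverse degree of a graph: the sum of the reciprocals of the vertex degrees. -/
noncomputable def invDegree {V : Type*} [Fintype V] (G : SimpleGraph V) [DecidableRel G.Adj] : ℝ :=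
  ∑ u, 1 / (G.degree u : ℝ)

/-- The independence number of a graph: the largest cardinality of a set of pairwise
nonadjacent vertices. -/
noncomputable def indepNum {V : Type*} [Fintype V] (G : SimpleGraph V) : ℕ :=
  sSup {k | ∃ s : Finset V, s.card = k ∧ ∀ u ∈ s, ∀ v ∈ s, ¬ G.Adj u v}

/-- A graph is a regular balanced bipartite graph if its vertices can be partitioned into
two parts of equal size with every edge joining the two parts, and all vertices have the
same degree. -/
def IsRegularBalancedBipartite {V : Type*} [Fintype V] (G : SimpleGraph V) [DecidableRel G.Adj] : Prop :=
  ∃ (A : Finset V) (r : ℕ), 2 * A.card = Fintype.card V ∧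
    (∀ u v, G.Adj u v → (u ∈ A ↔ v ∉ A)) ∧ G.IsRegularOfDegree r

/-- A graph is `k`-connected if it has more than `k` vertices and removing any set of
fewer than `k` vertices leaves a connected graph. -/
def IsKConnected {V : Type*} [Fintype V] (G : SimpleGraph V) (k : ℕ) : Prop :=
  k < Fintype.card V ∧
    ∀ S : Finset V, S.card < k → (G.induce (↑S : Set V)ᶜ).Connected

/-- A graph is traceable if it has a Hamiltonian path. -/
def IsTraceable {V : Type*} [DecidableEq V] (G : SimpleGraph V) : Prop :=
  ∃ (u v : V) (p : G.Walk u v), p.IsHamiltonian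

/-!
Let `s` be a maximum independent set. The degrees outside `s` are at most `Δ`, and since no edge
has both ends in `s`, the degrees inside `s` sum to at most `e`; hence `Z₁ ≤ (n - β) Δ² + e Δ`.
Completing the square, `e² / (2β) + β Δ³ / (2δ)` exceeds `e Δ` by the nonnegative quantity
`(e - β Δ)² / (2β) + β Δ² (Δ - δ) / (2δ)`. Equality forces `δ = Δ` and `e = β Δ`, so `G` is
regular and `n = 2β`; then the degrees inside `s` sum to exactly `e`, so every edge meets `s`.
-/

theorem indepNum_eq_simpleGraph_indepNum {V : Type*} [Fintype V] (G : SimpleGraph V) :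
    indepNum G = G.indepNum := by
  refine congrArg sSup (Set.ext fun k => exists_congr fun s => ?_)
  rw [SimpleGraph.isNIndepSet_iff, and_comm]
  refine and_congr_left fun _ => ⟨fun h u hu v hv _ => h u hu v hv, fun h u hu v hv huv => ?_⟩
  exact h hu hv huv.ne huv

section IndepSet

variable {V : Type*} {G : SimpleGraph V} [G.LocallyFinite] {s : Finset V}

theorem card_biUnion_incidenceFinset_of_isIndepSet [DecidableEq V]
    (hs : G.IsIndepSet (s : Set V)) :
    #(s.biUnion fun u => G.incidenceFinset u) = ∑ u ∈ s, G.degree u := by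
  rw [card_biUnion fun u hu v hv huv => ?_]
  · simp only [G.card_incidenceFinset_eq_degree]
  · rw [Function.onFun, ← disjoint_coe, G.coe_incidenceFinset, G.coe_incidenceFinset,
      Set.disjoint_iff_inter_eq_empty]
    exact G.incidenceSet_inter_incidenceSet_of_not_adj (hs hu hv huv) huv

theorem biUnion_incidenceFinset_subset_edgeFinset [DecidableEq V] [Fintype G.edgeSet] :
    (s.biUnion fun u => G.incidenceFinset u) ⊆ G.edgeFinset :=
  biUnion_subset.2 fun u _ => G.incidenceFinset_subset u

theorem sum_degree_le_card_edgeFinset_of_isIndepSet [Fintype G.edgeSet]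
    (hs : G.IsIndepSet (s : Set V)) :
    ∑ u ∈ s, G.degree u ≤ #G.edgeFinset := by
  classical
  rw [← card_biUnion_incidenceFinset_of_isIndepSet hs]
  exact card_le_card biUnion_incidenceFinset_subset_edgeFinset

theorem isVertexCover_of_sum_degree_eq_card_edgeFinset [Fintype G.edgeSet]
    (hs : G.IsIndepSet (s : Set V)) (h : ∑ u ∈ s, G.degree u = #G.edgeFinset) :
    G.IsVertexCover (s : Set V) := by
  classical
  have hcover : (s.biUnion fun u => G.incidenceFinset u) = G.edgeFinset :=
    eq_of_subset_of_card_le biUnion_incidenceFinset_subset_edgeFinset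
      (by rw [card_biUnion_incidenceFinset_of_isIndepSet hs, h])
  intro v w hvw
  have hmem : s(v, w) ∈ s.biUnion fun u => G.incidenceFinset u := by
    rwa [hcover, SimpleGraph.mem_edgeFinset, SimpleGraph.mem_edgeSet]
  obtain ⟨u, hu, huvw⟩ := mem_biUnion.1 hmem
  rw [G.mem_incidenceFinset, SimpleGraph.mk'_mem_incidenceSet_iff] at huvw
  rcases huvw.2 with rfl | rfl
  · exact Or.inl hu
  · exact Or.inr hu

end IndepSet

section Regular

variable {V : Type*} [Fintype V] {G : SimpleGraph V} [DecidableRel G.Adj] {s : Finset V} {r : ℕ}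

theorem two_mul_card_edgeFinset_of_isRegularOfDegree (hG : G.IsRegularOfDegree r) :
    2 * #G.edgeFinset = Fintype.card V * r := by
  rw [← G.sum_degrees_eq_twice_card_edges, sum_const_nat fun v _ => hG v, card_univ]

theorem card_edgeFinset_of_isRegularOfDegree_of_two_mul_eq {k : ℕ} (hG : G.IsRegularOfDegree r)
    (hk : 2 * k = Fintype.card V) : #G.edgeFinset = k * r := by
  have hedges := two_mul_card_edgeFinset_of_isRegularOfDegree hG
  rw [← hk, mul_assoc] at hedges
  exact Nat.eq_of_mul_eq_mul_left two_pos hedges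

theorem isRegularOfDegree_maxDegree_of_minDegree_eq (h : G.minDegree = G.maxDegree) :
    G.IsRegularOfDegree G.maxDegree := fun v =>
  (G.degree_le_maxDegree v).antisymm (h.ge.trans (G.minDegree_le_degree v))

theorem two_mul_card_le_of_isRegularOfDegree (hG : G.IsRegularOfDegree r) (hr : 0 < r)
    (hs : G.IsIndepSet (s : Set V)) : 2 * #s ≤ Fintype.card V := by
  have hsum := sum_degree_le_card_edgeFinset_of_isIndepSet hs
  rw [sum_const_nat fun v _ => hG v] at hsum
  refine Nat.le_of_mul_le_mul_right ?_ hr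
  linarith [two_mul_card_edgeFinset_of_isRegularOfDegree hG]

theorem isVertexCover_of_isRegularOfDegree_of_two_mul_card_eq (hG : G.IsRegularOfDegree r)
    (hs : G.IsIndepSet (s : Set V)) (h : 2 * #s = Fintype.card V) :
    G.IsVertexCover (s : Set V) := by
  refine isVertexCover_of_sum_degree_eq_card_edgeFinset hs ?_
  rw [sum_const_nat fun v _ => hG v, card_edgeFinset_of_isRegularOfDegree_of_two_mul_eq hG h]

theorem nonempty_of_minDegree_pos (hδ : 0 < G.minDegree) : Nonempty V :=
  not_isEmpty_iff.1 fun _ => hδ.ne' G.minDegree_of_subsingleton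

theorem isRegularBalancedBipartite_iff (hδ : 0 < G.minDegree) :
    IsRegularBalancedBipartite G ↔
      (∃ r, G.IsRegularOfDegree r) ∧ 2 * G.indepNum = Fintype.card V := by
  have := nonempty_of_minDegree_pos hδ
  obtain ⟨s, hs, hcard⟩ := G.exists_isNIndepSet_indepNum
  constructor
  · rintro ⟨A, r, hA, hbip, hreg⟩
    have hA_indep : G.IsIndepSet (A : Set V) := fun u hu v hv _ huv => (hbip u v huv).1 hu hv
    have hle : 2 * #s ≤ Fintype.card V :=
      two_mul_card_le_of_isRegularOfDegree hreg (hreg.minDegree_eq ▸ hδ) hs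
    have hge : #A ≤ G.indepNum := hA_indep.card_le_indepNum
    exact ⟨⟨r, hreg⟩, by omega⟩
  · rintro ⟨⟨r, hreg⟩, hα⟩
    rw [← hcard] at hα
    have hcover := isVertexCover_of_isRegularOfDegree_of_two_mul_card_eq hreg hs hα
    refine ⟨s, r, hα, fun u v huv => ⟨fun hu hv => hs hu hv huv.ne huv, fun hv => ?_⟩, hreg⟩
    exact (hcover huv).resolve_right hv

end Regular

section Zagreb

variable {V : Type*} [Fintype V] (G : SimpleGraph V) [DecidableRel G.Adj]

theorem zagreb1_le_add_sum_degree_mul_maxDegree (s : Finset V) :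
    zagreb1 G ≤ ((Fintype.card V : ℝ) - #s) * (G.maxDegree : ℝ) ^ 2
      + (∑ u ∈ s, (G.degree u : ℝ)) * G.maxDegree := by
  classical
  calc zagreb1 G
      = ∑ u ∈ sᶜ, (G.degree u : ℝ) ^ 2 + ∑ u ∈ s, (G.degree u : ℝ) ^ 2 :=
        (sum_compl_add_sum s _).symm
    _ ≤ ∑ _u ∈ sᶜ, (G.maxDegree : ℝ) ^ 2 + ∑ u ∈ s, (G.degree u : ℝ) * G.maxDegree := by
        gcongr with u _ u _
        · exact G.degree_le_maxDegree u
        · rw [sq]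
          gcongr
          exact G.degree_le_maxDegree u
    _ = _ := by
        rw [sum_const, nsmul_eq_mul, card_compl, Nat.cast_sub s.card_le_univ, sum_mul]

theorem zagreb1_le_add_card_edgeFinset_mul_maxDegree {s : Finset V}
    (hs : G.IsIndepSet (s : Set V)) :
    zagreb1 G ≤ ((Fintype.card V : ℝ) - #s) * (G.maxDegree : ℝ) ^ 2
      + (#G.edgeFinset : ℝ) * G.maxDegree := by
  refine (zagreb1_le_add_sum_degree_mul_maxDegree G s).trans ?_
  gcongr
  exact_mod_cast sum_degree_le_card_edgeFinset_of_isIndepSet hs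

theorem zagreb1_eq_card_mul_sq {r : ℕ} (hG : G.IsRegularOfDegree r) :
    zagreb1 G = Fintype.card V * (r : ℝ) ^ 2 := by
  simp only [zagreb1, hG.degree_eq, sum_const, card_univ, nsmul_eq_mul]

end Zagreb

section CompletingTheSquare

variable {K : Type*} [Field K] {b d D e : K}

theorem sq_div_add_mul_cube_div_eq [NeZero (2 : K)] (hb : b ≠ 0) (hd : d ≠ 0) :
    e ^ 2 / (2 * b) + b * D ^ 3 / (2 * d)
      = e * D + ((e - b * D) ^ 2 / (2 * b) + b * D ^ 2 * (D - d) / (2 * d)) := by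
  field_simp
  ring

variable [LinearOrder K] [IsStrictOrderedRing K]

theorem mul_le_sq_div_add_mul_cube_div (hb : 0 < b) (hd : 0 < d) (hdD : d ≤ D) :
    e * D ≤ e ^ 2 / (2 * b) + b * D ^ 3 / (2 * d) := by
  have : 0 ≤ D - d := sub_nonneg.2 hdD
  rw [sq_div_add_mul_cube_div_eq hb.ne' hd.ne']
  exact le_add_of_nonneg_right (by positivity)

theorem mul_eq_sq_div_add_mul_cube_div_iff (hb : 0 < b) (hd : 0 < d) (hdD : d ≤ D) :
    e * D = e ^ 2 / (2 * b) + b * D ^ 3 / (2 * d) ↔ e = b * D ∧ d = D := by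
  have : 0 ≤ D - d := sub_nonneg.2 hdD
  have hD := hd.trans_le hdD
  rw [sq_div_add_mul_cube_div_eq hb.ne' hd.ne', left_eq_add,
    add_eq_zero_iff_of_nonneg (by positivity) (by positivity)]
  simp [hb.ne', hd.ne', hD.ne', sub_eq_zero, eq_comm (a := d)]

end CompletingTheSquare

section ZagrebBound

variable {V : Type*} [Fintype V] (G : SimpleGraph V) [DecidableRel G.Adj] {s : Finset V}

theorem zagreb1_le_of_isIndepSet (hδ : 0 < G.minDegree) (hs : G.IsIndepSet (s : Set V))
    (hne : s.Nonempty) :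
    zagreb1 G ≤ ((Fintype.card V : ℝ) - #s) * (G.maxDegree : ℝ) ^ 2
      + (#G.edgeFinset : ℝ) ^ 2 / (2 * #s) + #s * (G.maxDegree : ℝ) ^ 3 / (2 * G.minDegree) := by
  rw [add_assoc]
  refine (zagreb1_le_add_card_edgeFinset_mul_maxDegree G hs).trans ?_
  gcongr
  exact mul_le_sq_div_add_mul_cube_div (by exact_mod_cast hne.card_pos) (by exact_mod_cast hδ)
    (by exact_mod_cast G.minDegree_le_maxDegree)

theorem zagreb1_eq_iff_of_isIndepSet (hδ : 0 < G.minDegree) (hs : G.IsIndepSet (s : Set V))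
    (hne : s.Nonempty) :
    zagreb1 G = ((Fintype.card V : ℝ) - #s) * (G.maxDegree : ℝ) ^ 2
      + (#G.edgeFinset : ℝ) ^ 2 / (2 * #s) + #s * (G.maxDegree : ℝ) ^ 3 / (2 * G.minDegree) ↔
      (∃ r, G.IsRegularOfDegree r) ∧ 2 * #s = Fintype.card V := by
  have := nonempty_of_minDegree_pos hδ
  have hb : (0 : ℝ) < #s := by exact_mod_cast hne.card_pos
  have hd : (0 : ℝ) < G.minDegree := by exact_mod_cast hδ
  have hdD : (G.minDegree : ℝ) ≤ G.maxDegree := by exact_mod_cast G.minDegree_le_maxDegree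
  have hsq_eq_iff := mul_eq_sq_div_add_mul_cube_div_iff (e := (#G.edgeFinset : ℝ)) hb hd hdD
  constructor
  · intro heq
    have hsq_le := mul_le_sq_div_add_mul_cube_div (e := (#G.edgeFinset : ℝ)) hb hd hdD
    have hZ := zagreb1_le_add_card_edgeFinset_mul_maxDegree G hs
    obtain ⟨he, hdeg⟩ := hsq_eq_iff.1 (by linarith)
    norm_cast at he hdeg
    have hreg := isRegularOfDegree_maxDegree_of_minDegree_eq hdeg
    have hedges := two_mul_card_edgeFinset_of_isRegularOfDegree hreg
    rw [he, ← mul_assoc] at hedges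
    exact ⟨⟨_, hreg⟩, Nat.eq_of_mul_eq_mul_right (hdeg ▸ hδ) hedges⟩
  · rintro ⟨⟨r, hreg⟩, hcard⟩
    have he := card_edgeFinset_of_isRegularOfDegree_of_two_mul_eq hreg hcard
    rw [hreg.maxDegree_eq, hreg.minDegree_eq, he, Nat.cast_mul] at hsq_eq_iff
    rw [hreg.maxDegree_eq, hreg.minDegree_eq, zagreb1_eq_card_mul_sq G hreg, he, Nat.cast_mul,
      add_assoc, ← hsq_eq_iff.2 ⟨rfl, rfl⟩, ← hcard]
    push_cast
    ring

end ZagrebBound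

/-- For a graph `G` with `n` vertices, `e` edges, minimum degree `δ ≥ 1`, maximum degree `Δ`,
and independence number `β`: `Z₁(G) ≤ (n − β)Δ² + e²/(2β) + βΔ³/(2δ)`, with equality iff
`G` is a regular balanced bipartite graph. -/
theorem stmt1 {V : Type*} [Fintype V] [DecidableEq V] (G : SimpleGraph V) [DecidableRel G.Adj]
    (hδ : 1 ≤ G.minDegree) :
    zagreb1 G ≤ ((Fintype.card V : ℝ) - indepNum G) * (G.maxDegree : ℝ) ^ 2
        + (G.edgeFinset.card : ℝ) ^ 2 / (2 * indepNum G)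
        + (indepNum G : ℝ) * (G.maxDegree : ℝ) ^ 3 / (2 * G.minDegree) ∧
    (zagreb1 G = ((Fintype.card V : ℝ) - indepNum G) * (G.maxDegree : ℝ) ^ 2
        + (G.edgeFinset.card : ℝ) ^ 2 / (2 * indepNum G)
        + (indepNum G : ℝ) * (G.maxDegree : ℝ) ^ 3 / (2 * G.minDegree)
      ↔ IsRegularBalancedBipartite G) := by
  obtain ⟨s, hs, hcard⟩ := G.exists_isNIndepSet_indepNum
  obtain ⟨v⟩ := nonempty_of_minDegree_pos hδ
  have hv : G.IsIndepSet (({v} : Finset V) : Set V) := by simp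
  have hne : s.Nonempty := card_pos.1 (hcard ▸ hv.card_le_indepNum)
  rw [indepNum_eq_simpleGraph_indepNum, isRegularBalancedBipartite_iff hδ, ← hcard]
  exact ⟨zagreb1_le_of_isIndepSet G hδ hs hne, zagreb1_eq_iff_of_isIndepSet G hδ hs hne⟩
end

section
/- Let G be a k-connected (k ≥ 2) finite simple graph with n ≥ 3 vertices, e edges, and minimum degree δ. If F(G) ≤ (n − k − 1)·δ³ + δ·(2(k + 1)²δ² − e²)/(k + 1), then G is Hamiltonian. -/
open Finset

/-! By the Chvátal–Erdős theorem, a `k`-connected non-Hamiltonian graph has `k + 1` independent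
vertices. Counting the edges at such a set `I` gives `(k + 1)δ ≤ ∑ v ∈ I, d(v) ≤ e`. On the other
hand the hypothesis reads `F ≤ nδ³ + δ/(k + 1) · (((k + 1)δ)² - e²)`, and `F ≥ nδ³`, so
`e ≤ (k + 1)δ`. Equality throughout says that every edge has exactly one end in `I` and that all
degrees are `δ`. Hence `G` is balanced bipartite with parts of size `k + 1 < 2δ`, and the Moon–Moser
degree condition makes it Hamiltonian after all.

For Chvátal–Erdős, take a longest cycle and a vertex `h` off it. The component of `h` off the cycle
has at least `k` attachment vertices on the cycle, and their successors together with `h` are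
independent, as an edge among them would allow the cycle to be rerouted through that component.
-/

section

open SimpleGraph

variable {V : Type*} {G : SimpleGraph V}

section Walks

variable {u v x y : V}

lemma support_append_cons (p : G.Walk u x) (h : G.Adj x y) (q : G.Walk y v) :
    (p.append (.cons h q)).support = p.support ++ q.support := by
  simp [Walk.support_append]

lemma exists_eq_append_cons {p : G.Walk u v} (hx : x ∈ p.support) (hxv : x ≠ v) :
    ∃ (y : V) (q : G.Walk u x) (h : G.Adj x y) (r : G.Walk y v), p = q.append (.cons h r) := by
  obtain ⟨q, r, rfl⟩ := Walk.mem_support_iff_exists_append.1 hx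
  obtain ⟨y, h, r, rfl⟩ := r.exists_eq_cons_of_ne hxv
  exact ⟨y, q, h, r, rfl⟩

lemma formPerm_support_end [DecidableEq V] (p : G.Walk u v) : p.support.formPerm v = u := by
  have h := List.formPerm_apply_getLast u p.support.tail
  simpa only [Walk.cons_support_tail, Walk.cons_tail_support, Walk.getLast_support] using h

lemma formPerm_support_append_cons [DecidableEq V] {p : G.Walk u x} {h : G.Adj x y}
    {q : G.Walk y v} (hpq : (p.append (.cons h q)).IsPath) :
    (p.append (.cons h q)).support.formPerm x = y := by
  have hlen : p.length + 1 < (p.append (.cons h q)).support.length := by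
    simp [Walk.length_support]
  have := List.formPerm_apply_lt_getElem _ hpq.support_nodup p.length hlen
  simpa [Walk.support_getElem_eq_getVert, Walk.getVert_append] using this

lemma isPath_append_cons_iff {p : G.Walk u x} {h : G.Adj x y} {q : G.Walk y v} :
    (p.append (.cons h q)).IsPath ↔
      p.IsPath ∧ q.IsPath ∧ p.support.Disjoint q.support := by
  simp only [Walk.isPath_def, support_append_cons, List.nodup_append', List.Disjoint]

lemma isHamiltonian_of_adj_ends [Fintype V] [DecidableEq V] {p : G.Walk u v}
    (hp : p.IsHamiltonian) (h : G.Adj v u) (hV : 3 ≤ Fintype.card V) : G.IsHamiltonian := by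
  have hlen : (Walk.cons h p).length = Fintype.card V := by
    rw [Walk.length_cons, hp.length_eq]; omega
  refine fun _ ↦ ⟨v, .cons h p, Walk.isHamiltonianCycle_iff_isCycle_and_length_eq.2 ⟨?_, hlen⟩⟩
  refine Walk.isCycle_iff_isPath_tail_and_le_length.2 ⟨?_, hlen ▸ hV⟩
  simpa using hp.isPath

end Walks

/-- A cyclic arrangement of distinct vertices in which consecutive vertices are adjacent. Unlike
`Walk.IsCycle` it forgets the base point, and it also admits the empty cycle and, for each edge, a
cycle of length two, so that a longest one exists in every finite graph. -/
structure IsVertexCycle (G : SimpleGraph V) (c : Cycle V) : Prop where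
  nodup : c.Nodup
  chain : c.Chain G.Adj

lemma isVertexCycle_coe_support_iff {u v : V} {p : G.Walk u v} :
    IsVertexCycle G p.support ↔ p.IsPath ∧ G.Adj v u := by
  have hchain : Cycle.Chain G.Adj (p.support : Cycle V) ↔ G.Adj v u := by
    rw [Cycle.chain_ne_nil _ p.support_ne_nil, Walk.getLast_support, ← Walk.cons_tail_support,
      List.isChain_cons_cons, Walk.cons_tail_support]
    exact and_iff_left p.isChain_adj_support
  rw [Walk.isPath_def, ← Cycle.nodup_coe_iff, ← hchain]
  exact ⟨fun h ↦ ⟨h.nodup, h.chain⟩, fun h ↦ ⟨h.1, h.2⟩⟩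

namespace IsVertexCycle

variable [DecidableEq V] {c : Cycle V}

lemma exists_walk {x : V} (hc : IsVertexCycle G c) (hx : x ∈ c) :
    ∃ (u : V) (p : G.Walk u x), p.IsPath ∧ c = p.support ∧ c.formPerm hc.nodup x = u := by
  obtain ⟨l, hl⟩ : ∃ l : List V, c = ↑(l ++ [x]) := by
    induction c using Quotient.inductionOn' with
    | h l =>
      obtain ⟨a, b, rfl⟩ := List.append_of_mem (Cycle.mem_coe_iff.1 hx)
      refine ⟨b ++ a, Cycle.coe_eq_coe.2 ?_⟩
      simpa using List.isRotated_append (l := a ++ [x]) (l' := b)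
  subst hl
  have hne : l ++ [x] ≠ [] := by simp
  have hchain : (l ++ [x]).IsChain G.Adj := ((Cycle.chain_ne_nil _ hne).1 hc.chain).tail
  obtain ⟨u, p, hp⟩ : ∃ (u : V) (p : G.Walk u x), p.support = l ++ [x] :=
    ⟨_, (Walk.ofSupport _ hne hchain).copy rfl (by simp), by simp⟩
  have hu : (l ++ [x]).formPerm x = u := hp ▸ formPerm_support_end p
  exact ⟨u, p, (Walk.isPath_def p).2 (hp ▸ Cycle.nodup_coe_iff.1 hc.nodup), by rw [hp], hu⟩

lemma formPerm_mem {x : V} (hc : IsVertexCycle G c) (hx : x ∈ c) :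
    c.formPerm hc.nodup x ∈ c := by
  rw [c.formPerm_apply_mem_eq_next hc.nodup x hx]
  exact c.next_mem hc.nodup x hx

lemma isHamiltonian [Fintype V] (hc : IsVertexCycle G c) (hall : ∀ v, v ∈ c)
    (hV : 3 ≤ Fintype.card V) : G.IsHamiltonian := by
  obtain ⟨v⟩ : Nonempty V := Fintype.card_pos_iff.1 (by omega)
  obtain ⟨u, p, hp, rfl, -⟩ := hc.exists_walk (hall v)
  have hham : p.IsHamiltonian := hp.isHamiltonian_iff.2 fun w ↦ Cycle.mem_coe_iff.1 (hall w)
  exact isHamiltonian_of_adj_ends hham (isVertexCycle_coe_support_iff.1 hc).2 hV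

end IsVertexCycle

lemma exists_maximalFor_isVertexCycle [Finite V] (G : SimpleGraph V) :
    ∃ c, MaximalFor (IsVertexCycle G) Cycle.length c := by
  classical
  have := Fintype.ofFinite V
  have hnodup : {c : Cycle V | c.Nodup}.Finite :=
    Set.finite_coe_iff.1 (inferInstanceAs (Finite {c : Cycle V // c.Nodup}))
  have hfin : {c | IsVertexCycle G c}.Finite := hnodup.subset fun c hc ↦ hc.nodup
  exact hfin.exists_maximalFor Cycle.length _ ⟨Cycle.nil, Cycle.nodup_nil, Cycle.Chain.nil _⟩

/-- The vertices of attachment to `s` of the component of `G - s` containing `h`: those vertices of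
`s` with a neighbour in that component. Membership in the component is expressed by a walk in `G`
avoiding `s`, so that no induced subgraph is needed. -/
def attachments (G : SimpleGraph V) (s : Set V) (h : V) : Set V :=
  {x ∈ s | ∃ u, G.Adj x u ∧ ∃ p : G.Walk h u, ∀ z ∈ p.support, z ∉ s}

section Attachments

variable {s : Set V} {h x y : V}

lemma mem_attachments_of_adj (hh : h ∉ s) (hx : x ∈ s) (hxh : G.Adj x h) :
    x ∈ attachments G s h :=
  ⟨hx, h, hxh, .nil, by simpa using hh⟩

lemma exists_mem_support_mem_attachments (hh : h ∉ s) (hy : y ∈ s) (p : G.Walk h y) :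
    ∃ x ∈ p.support, x ∈ attachments G s h := by
  let R : Set V := {u | ∃ q : G.Walk h u, ∀ z ∈ q.support, z ∉ s}
  have hhR : h ∈ R := ⟨.nil, by simpa using hh⟩
  have hyR : y ∉ R := fun ⟨q, hq⟩ ↦ hq y q.end_mem_support hy
  obtain ⟨d, hd, ⟨q, hq⟩, hdR⟩ := p.exists_boundary_dart R hhR hyR
  refine ⟨d.snd, p.dart_snd_mem_support_of_mem_darts hd, ?_, d.fst, d.adj.symm, q, hq⟩
  by_contra hds
  refine hdR ⟨q.concat d.adj, fun z hz ↦ ?_⟩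
  rw [Walk.support_concat, List.mem_append, List.mem_singleton] at hz
  rcases hz with hz | rfl
  exacts [hq z hz, hds]

lemma exists_isPath_of_mem_attachments (hx : x ∈ attachments G s h)
    (hy : y ∈ attachments G s h) : ∃ (u v : V) (p : G.Walk u v), p.IsPath ∧
      (∀ z ∈ p.support, z ∉ s) ∧ G.Adj x u ∧ G.Adj v y := by
  classical
  obtain ⟨-, u, hxu, p, hp⟩ := hx
  obtain ⟨-, v, hyv, q, hq⟩ := hy
  refine ⟨u, v, (p.reverse.append q).bypass, Walk.bypass_isPath _, fun z hz ↦ ?_, hxu, hyv.symm⟩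
  have hz' := Walk.support_bypass_subset_support _ hz
  rw [Walk.mem_support_append_iff, Walk.support_reverse, List.mem_reverse] at hz'
  exact hz'.elim (hp z) (hq z)

end Attachments

namespace IsKConnected

variable [Fintype V] {k : ℕ}

lemma exists_walk_disjoint (hG : IsKConnected G k) {S : Finset V} (hS : #S < k) {x y : V}
    (hx : x ∉ S) (hy : y ∉ S) : ∃ p : G.Walk x y, ∀ z ∈ p.support, z ∉ S := by
  obtain ⟨p⟩ := (hG.2 S hS).preconnected ⟨x, by simpa using hx⟩ ⟨y, by simpa using hy⟩
  let f : G.induce (↑S : Set V)ᶜ →g G := (Embedding.induce _).toHom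
  have hp : ∀ z ∈ (p.map f).support, z ∉ S := by
    simp only [Walk.support_map, List.mem_map]
    rintro _ ⟨w, -, rfl⟩
    exact w.2
  exact ⟨p.map f, hp⟩

lemma le_ncard_attachments (hG : IsKConnected G k) {s : Set V} {h y : V} (hh : h ∉ s)
    (hy : y ∈ s) (hya : y ∉ attachments G s h) : k ≤ (attachments G s h).ncard := by
  classical
  by_contra! hlt
  rw [Set.ncard_eq_toFinset_card'] at hlt
  have hha : h ∉ attachments G s h := fun hm ↦ hh hm.1
  obtain ⟨p, hp⟩ := hG.exists_walk_disjoint hlt (by simpa using hha) (by simpa using hya)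
  obtain ⟨x, hxp, hx⟩ := exists_mem_support_mem_attachments hh hy p
  exact hp x hxp (by simpa using hx)

lemma le_degree [DecidableRel G.Adj] (hG : IsKConnected G k) (v : V) : k ≤ G.degree v := by
  classical
  by_contra! hlt
  obtain ⟨w, hw⟩ : ∃ w, w ∉ insert v (G.neighborFinset v) := by
    by_contra! hall
    have := card_insert_le v (G.neighborFinset v)
    rw [eq_univ_of_forall hall, card_univ, G.card_neighborFinset_eq_degree] at this
    exact absurd hG.1 (by omega)
  obtain ⟨hwv, hwN⟩ := not_or.1 (mem_insert.not.1 hw)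
  obtain ⟨p, hp⟩ := hG.exists_walk_disjoint (S := G.neighborFinset v) hlt
    (G.notMem_neighborFinset_self v) hwN
  obtain ⟨u, huv, p, rfl⟩ := p.exists_eq_cons_of_ne (Ne.symm hwv)
  exact hp u (by simp) (by simpa using huv)

lemma le_minDegree [DecidableRel G.Adj] (hG : IsKConnected G k) : k ≤ G.minDegree := by
  have : Nonempty V := Fintype.card_pos_iff.1 (k.zero_le.trans_lt hG.1)
  exact G.le_minDegree_of_forall_le_degree k hG.le_degree

end IsKConnected

section ChvatalErdos

variable {c : Cycle V} {h x y : V}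

lemma support_length_le_of_maximalFor (hc : MaximalFor (IsVertexCycle G) Cycle.length c) {u v : V}
    {p : G.Walk u v} (hp : p.IsPath) (huv : G.Adj v u) : p.support.length ≤ c.length :=
  (le_total _ _).elim id (hc.2 (isVertexCycle_coe_support_iff.2 ⟨hp, huv⟩))

lemma exists_mem_of_maximalFor (hc : MaximalFor (IsVertexCycle G) Cycle.length c)
    (hxy : G.Adj x y) : ∃ z, z ∈ c := by
  have hle : 2 ≤ c.length :=
    support_length_le_of_maximalFor hc (Walk.IsPath.of_adj hxy) hxy.symm
  induction c using Quotient.inductionOn' with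
  | h l => exact List.exists_mem_of_length_pos (zero_lt_two.trans_le hle)

variable [DecidableEq V]

lemma formPerm_notMem_attachments (hc : MaximalFor (IsVertexCycle G) Cycle.length c)
    (hx : x ∈ attachments G {v | v ∈ c} h) :
    c.formPerm hc.1.nodup x ∉ attachments G {v | v ∈ c} h := by
  intro hσ
  obtain ⟨s, p, hp, rfl, hs⟩ := hc.1.exists_walk hx.1
  rw [hs] at hσ
  obtain ⟨u, v, q, hq, hqc, hxu, hvs⟩ := exists_isPath_of_mem_attachments hx hσ
  have hpq : (p.append (.cons hxu q)).IsPath :=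
    isPath_append_cons_iff.2 ⟨hp, hq, fun z hzp hzq ↦ hqc z hzq hzp⟩
  have hle := support_length_le_of_maximalFor hc hpq hvs
  simp only [support_append_cons, List.length_append, Cycle.length_coe, Walk.length_support] at hle
  omega

lemma not_adj_formPerm_formPerm (hc : MaximalFor (IsVertexCycle G) Cycle.length c)
    (hx : x ∈ attachments G {v | v ∈ c} h) (hy : y ∈ attachments G {v | v ∈ c} h) :
    ¬ G.Adj (c.formPerm hc.1.nodup x) (c.formPerm hc.1.nodup y) := by
  intro hadj
  have hyx : y ≠ x := by rintro rfl; exact G.irrefl hadj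
  obtain ⟨s, p, hp, rfl, hs⟩ := hc.1.exists_walk hx.1
  obtain ⟨z, a, hyz, b, rfl⟩ := exists_eq_append_cons (Cycle.mem_coe_iff.1 hy.1) hyx
  have hz : Cycle.formPerm (a.append (.cons hyz b)).support hc.1.nodup y = z :=
    formPerm_support_append_cons hp
  rw [hs, hz] at hadj
  obtain ⟨u, v, q, hq, hqc, hyu, hvx⟩ := exists_isPath_of_mem_attachments hy hx
  have hqab : ∀ w ∈ q.support, w ∉ a.support ∧ w ∉ b.support := fun w hw ↦ by
    simpa [support_append_cons] using hqc w hw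
  obtain ⟨ha, hb, hab⟩ := isPath_append_cons_iff.1 hp
  -- From the cycle `s ⋯ y z ⋯ x s`, drop `y z` and `x s`, and insert `s z` and `y ⋯ x` through `q`.
  have hnew : (a.append (.cons hyu (q.append (.cons hvx b.reverse)))).IsPath := by
    refine isPath_append_cons_iff.2 ⟨ha, isPath_append_cons_iff.2 ⟨hq, hb.reverse, ?_⟩, ?_⟩
    · intro w hwq hwb
      exact (hqab w hwq).2 (by simpa using hwb)
    · intro w hwa hw
      rw [support_append_cons, List.mem_append, Walk.support_reverse, List.mem_reverse] at hw
      exact hw.elim (fun hwq ↦ (hqab w hwq).1 hwa) (hab hwa)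
  have hle := support_length_le_of_maximalFor hc hnew hadj.symm
  simp only [support_append_cons, List.length_append, Cycle.length_coe, Walk.length_support,
    Walk.length_reverse] at hle
  omega

lemma isIndepSet_insert_formPerm_image (hc : MaximalFor (IsVertexCycle G) Cycle.length c)
    (hh : h ∉ c) : G.IsIndepSet
      (insert h (c.formPerm hc.1.nodup '' attachments G {v | v ∈ c} h)) := by
  refine Set.pairwise_insert.2 ⟨?_, ?_⟩
  · rintro _ ⟨x, hx, rfl⟩ _ ⟨y, hy, rfl⟩ -
    exact not_adj_formPerm_formPerm hc hx hy
  · rintro _ ⟨x, hx, rfl⟩ -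
    have hnot : ¬ G.Adj (c.formPerm hc.1.nodup x) h := fun hxh ↦
      formPerm_notMem_attachments hc hx <|
        mem_attachments_of_adj hh (hc.1.formPerm_mem hx.1) hxh
    exact ⟨fun hhx ↦ hnot hhx.symm, hnot⟩

lemma ncard_insert_formPerm_image [Finite V] (hc : IsVertexCycle G c) (hh : h ∉ c) :
    (insert h (c.formPerm hc.nodup '' attachments G {v | v ∈ c} h)).ncard =
      (attachments G {v | v ∈ c} h).ncard + 1 := by
  rw [Set.ncard_insert_of_notMem, Set.ncard_image_of_injective _ (Equiv.injective _)]
  rintro ⟨x, hx, rfl⟩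
  exact hh (hc.formPerm_mem hx.1)

theorem IsKConnected.exists_isNIndepSet [Fintype V] {k : ℕ} (hG : IsKConnected G k) (hk : 0 < k)
    (hV : 3 ≤ Fintype.card V) (hham : ¬ G.IsHamiltonian) : ∃ s, G.IsNIndepSet (k + 1) s := by
  classical
  obtain ⟨c, hc⟩ := exists_maximalFor_isVertexCycle G
  obtain ⟨h, hh⟩ : ∃ h, h ∉ c := by
    by_contra! hall
    exact hham (hc.1.isHamiltonian hall hV)
  obtain ⟨y, hhy⟩ := (G.degree_pos_iff_exists_adj h).1 (hk.trans_le (hG.le_degree h))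
  obtain ⟨x, hx⟩ := exists_mem_of_maximalFor hc hhy
  obtain ⟨x, hxc, hx⟩ : ∃ x ∈ c, x ∉ attachments G {v | v ∈ c} h := by
    by_contra! hall
    exact formPerm_notMem_attachments hc (hall x hx) (hall _ (hc.1.formPerm_mem hx))
  have hcard := (hG.le_ncard_attachments hh hxc hx).trans_lt (Nat.lt_succ_self _)
  rw [Nat.succ_eq_add_one, ← ncard_insert_formPerm_image hc.1 hh,
    Set.ncard_eq_toFinset_card'] at hcard
  obtain ⟨s, hs, hsc⟩ := exists_subset_card_eq (Nat.succ_le_of_lt hcard)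
  refine ⟨s, (isIndepSet_insert_formPerm_image hc hh).mono ?_, hsc⟩
  exact Set.subset_toFinset.1 hs

end ChvatalErdos

section MoonMoser

lemma eq_snd_or_eq_penultimate_of_mem_edges {x y : V} {w : G.Walk x x} (hw : w.IsCycle)
    (hy : s(x, y) ∈ w.edges) : y = w.snd ∨ y = w.penultimate := by
  cases w with
  | nil => exact absurd hw Walk.not_isCycle_nil
  | cons h q =>
    rw [Walk.edges_cons, List.mem_cons] at hy
    rw [Walk.snd_cons]
    refine hy.imp Sym2.congr_right.1 fun hq ↦ ?_
    rw [Walk.penultimate_cons_of_not_nil _ _ (Walk.not_nil_of_isCycle_cons hw)]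
    exact ((Walk.cons_isCycle_iff q h).1 hw).1.eq_penultimate_of_mem_edges hq

variable {s t : Finset V} {a b : V}

lemma mem_edgeSet_of_mem_edgeSet_sup_edge {e : Sym2 V} (he : e ∈ (G ⊔ edge a b).edgeSet)
    (hab : e ≠ s(a, b)) : e ∈ G.edgeSet := by
  rw [edgeSet_sup] at he
  exact he.resolve_right fun h ↦ hab (edgeSet_edge_subset h)

variable [DecidableEq V]

lemma exists_isHamiltonian_walk_of_snd_eq {w : (G ⊔ edge a b).Walk a a} (hw : w.IsHamiltonianCycle)
    (hb : w.snd = b) : ∃ p : G.Walk a b, p.IsHamiltonian := by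
  cases w with
  | nil => exact absurd hw.isCycle Walk.not_isCycle_nil
  | @cons _ c _ hac q =>
    obtain rfl : c = b := (Walk.snd_cons q hac).symm.trans hb
    have hq : s(a, c) ∉ q.edges := ((Walk.cons_isCycle_iff q hac).1 hw.isCycle).2
    have hqG : ∀ e ∈ q.edges, e ∈ G.edgeSet := fun e he ↦
      mem_edgeSet_of_mem_edgeSet_sup_edge (q.edges_subset_edgeSet he) fun h ↦ hq (h ▸ he)
    refine ⟨(q.transfer G hqG).reverse, fun v ↦ ?_⟩
    rw [Walk.support_reverse, List.count_reverse, Walk.support_transfer]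
    simpa [Walk.support_tail_of_not_nil] using hw.isHamiltonian_tail v

variable [Fintype V]

lemma exists_isHamiltonian_walk_of_sup_edge (hG : ¬ G.IsHamiltonian)
    (hab : (G ⊔ edge a b).IsHamiltonian) : ∃ p : G.Walk a b, p.IsHamiltonian := by
  have : Nontrivial V := Fintype.one_lt_card_iff_nontrivial.1 <|
    Nat.lt_of_le_of_ne (Fintype.card_pos_iff.2 ⟨a⟩) fun h ↦ hG (.of_card_eq_one h.symm)
  obtain ⟨w, hw⟩ := hab.exists_isHamiltonianCycle a
  have hmem : s(a, b) ∈ w.edges := by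
    by_contra hnot
    have hwG : ∀ e ∈ w.edges, e ∈ G.edgeSet := fun e he ↦
      mem_edgeSet_of_mem_edgeSet_sup_edge (w.edges_subset_edgeSet he) fun h ↦ hnot (h ▸ he)
    refine hG fun _ ↦ ⟨a, w.transfer G hwG, ?_⟩
    rw [Walk.isHamiltonianCycle_iff_isCycle_and_length_eq, Walk.length_transfer]
    exact ⟨hw.isCycle.transfer hwG, hw.length_eq⟩
  have hrev : w.reverse.IsHamiltonianCycle := by
    rw [Walk.isHamiltonianCycle_iff_isCycle_and_length_eq, Walk.length_reverse]
    exact ⟨hw.isCycle.reverse, hw.length_eq⟩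
  obtain hsnd | hsnd : w.snd = b ∨ w.reverse.snd = b := by
    exact (eq_snd_or_eq_penultimate_of_mem_edges hw.isCycle hmem).imp Eq.symm fun h ↦
      w.snd_reverse.trans h.symm
  · exact exists_isHamiltonian_walk_of_snd_eq hw hsnd
  · exact exists_isHamiltonian_walk_of_snd_eq hrev hsnd

theorem isHamiltonian_of_lt_degree_add_degree [DecidableRel G.Adj] {p : G.Walk a b}
    (hp : p.IsHamiltonian) (hst : G.IsBipartiteWith s t) (ha : a ∈ s) (hb : b ∈ t)
    (hdeg : #t < G.degree a + G.degree b) (hV : 3 ≤ Fintype.card V) : G.IsHamiltonian := by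
  -- The neighbours of `a` and the successors along `p` of the neighbours of `b` overlap in `t`.
  have hσt : (G.neighborFinset b).map p.support.formPerm.toEmbedding ⊆ t := by
    intro y hy
    obtain ⟨x, hxb, rfl⟩ := mem_map.1 hy
    have hxs : x ∈ s := hst.mem_of_mem_adj' hb ((G.mem_neighborFinset b x).1 hxb).symm
    obtain ⟨y, q, hxy, r, rfl⟩ :=
      exists_eq_append_cons (hp.mem_support x) ((G.mem_neighborFinset b x).1 hxb).ne'
    change (q.append (.cons hxy r)).support.formPerm x ∈ t
    rw [formPerm_support_append_cons hp.isPath]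
    exact hst.mem_of_mem_adj hxs hxy
  obtain ⟨y, hy⟩ :
      ((G.neighborFinset b).map p.support.formPerm.toEmbedding ∩ G.neighborFinset a).Nonempty := by
    refine inter_nonempty_of_card_lt_card_add_card hσt
      (isBipartiteWith_neighborFinset_subset hst ha) ?_
    rwa [card_map, card_neighborFinset_eq_degree, card_neighborFinset_eq_degree, add_comm]
  obtain ⟨hyσ, hay⟩ := mem_inter.1 hy
  obtain ⟨x, hbx, hxy⟩ := mem_map.1 hyσ
  rw [mem_neighborFinset] at hay hbx
  obtain ⟨z, q, hxz, r, rfl⟩ := exists_eq_append_cons (hp.mem_support x) hbx.ne'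
  obtain rfl : z = y := (formPerm_support_append_cons hp.isPath).symm.trans hxy
  have hnew : (q.append (.cons hbx.symm r.reverse)).IsHamiltonian := fun v ↦ by
    simpa [support_append_cons] using hp v
  exact isHamiltonian_of_adj_ends hnew hay.symm hV

lemma isKConnected_of_forall_adj {k : ℕ} (hk : 0 < k) (hs : k ≤ #s) (hsc : k ≤ #sᶜ)
    (hadj : ∀ u ∈ s, ∀ v ∉ s, G.Adj u v) : IsKConnected G k := by
  refine ⟨by rw [← card_add_card_compl s]; omega, fun S hS ↦ ?_⟩
  obtain ⟨a, has, haS⟩ := exists_mem_notMem_of_card_lt_card (hS.trans_le hs)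
  obtain ⟨b, hbs, hbS⟩ := exists_mem_notMem_of_card_lt_card (hS.trans_le hsc)
  rw [mem_compl] at hbs
  refine connected_iff_exists_forall_reachable _ |>.2 ⟨⟨a, haS⟩, fun ⟨w, hwS⟩ ↦ ?_⟩
  by_cases hws : w ∈ s
  · have hab : (G.induce (↑S : Set V)ᶜ).Adj ⟨a, haS⟩ ⟨b, hbS⟩ := hadj a has b hbs
    have hbw : (G.induce (↑S : Set V)ᶜ).Adj ⟨b, hbS⟩ ⟨w, hwS⟩ := (hadj w hws b hbs).symm
    exact hab.reachable.trans hbw.reachable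
  · have haw : (G.induce (↑S : Set V)ᶜ).Adj ⟨a, haS⟩ ⟨w, hwS⟩ := hadj a has w hws
    exact haw.reachable

lemma isHamiltonian_of_forall_adj (hs : 2 ≤ #s) (hsc : #sᶜ = #s)
    (hadj : ∀ u ∈ s, ∀ v ∉ s, G.Adj u v) : G.IsHamiltonian := by
  by_contra hham
  have hV : 3 ≤ Fintype.card V := by rw [← card_add_card_compl s]; omega
  have hconn : IsKConnected G #s := isKConnected_of_forall_adj (by omega) le_rfl hsc.ge hadj
  obtain ⟨I, hI⟩ := hconn.exists_isNIndepSet (by omega) hV hham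
  have hsI : #s < #I := hI.card_eq ▸ Nat.lt_succ_self _
  obtain ⟨v, hvI, hvs⟩ := exists_mem_notMem_of_card_lt_card hsI
  obtain ⟨u, huI, hus⟩ := exists_mem_notMem_of_card_lt_card (hsc.trans_lt hsI)
  rw [notMem_compl] at hus
  exact hI.isIndepSet huI hvI (by rintro rfl; exact hvs hus) (hadj u hus v hvs)

-- A counterexample with as many edges as possible becomes Hamiltonian on adding any missing edge.
theorem isHamiltonian_of_isBipartiteWith [DecidableRel G.Adj] (hG : G.IsBipartiteWith s ↑sᶜ)
    (hs : 2 ≤ #s) (hsc : #sᶜ = #s)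
    (hdeg : ∀ a ∈ s, ∀ b ∉ s, ¬ G.Adj a b → #s < G.degree a + G.degree b) : G.IsHamiltonian := by
  classical
  by_contra hham
  have hV : 3 ≤ Fintype.card V := by rw [← card_add_card_compl s]; omega
  obtain ⟨H, hGH, ⟨hH, hHham⟩, hmax⟩ := Finite.exists_le_maximal
    (p := fun H : SimpleGraph V ↦ H.IsBipartiteWith s ↑sᶜ ∧ ¬ H.IsHamiltonian) ⟨hG, hham⟩
  refine hHham (isHamiltonian_of_forall_adj hs hsc fun a ha b hb ↦ ?_)
  by_contra hab
  have hHab : (H ⊔ edge a b).IsHamiltonian := by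
    by_contra hnot
    have hbip : (H ⊔ edge a b).IsBipartiteWith s ↑sᶜ := ⟨hH.disjoint, fun u v huv ↦ by
      rw [sup_adj, edge_adj] at huv
      obtain huv | ⟨⟨rfl, rfl⟩ | ⟨rfl, rfl⟩, -⟩ := huv
      · exact hH.mem_of_adj huv
      · exact .inl ⟨ha, mem_compl.2 hb⟩
      · exact .inr ⟨mem_compl.2 hb, ha⟩⟩
    have hne : a ≠ b := by rintro rfl; exact hb ha
    exact (H.lt_sup_edge a b hne hab).not_ge (hmax ⟨hbip, hnot⟩ le_sup_left)
  obtain ⟨p, hp⟩ := exists_isHamiltonian_walk_of_sup_edge hHham hHab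
  refine hHham (isHamiltonian_of_lt_degree_add_degree hp hH ha (mem_compl.2 hb) ?_ hV)
  rw [hsc]
  exact (hdeg a ha b hb fun h ↦ hab (hGH h)).trans_le
    (add_le_add (degree_le_of_le hGH) (degree_le_of_le hGH))

end MoonMoser

section Counting

variable [Fintype V] [DecidableRel G.Adj] {s t : Finset V} {d : ℕ}

lemma card_eq_card_of_isRegularOfDegree (hst : G.IsBipartiteWith s t)
    (hG : G.IsRegularOfDegree d) (hd : d ≠ 0) : #s = #t := by
  have hsum := isBipartiteWith_sum_degrees_eq hst
  simp only [hG.degree_eq, sum_const, smul_eq_mul] at hsum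
  exact Nat.eq_of_mul_eq_mul_right (Nat.pos_of_ne_zero hd) hsum

lemma degree_between_compl [DecidableEq V] (hs : G.IsIndepSet s) {v : V} (hv : v ∈ s) :
    (G.between s ↑sᶜ).degree v = G.degree v := by
  simp only [← card_neighborFinset_eq_degree]
  congr 1
  ext w
  have hw : G.Adj v w → w ∉ s := fun hvw hws ↦ hs hv hws hvw.ne hvw
  simpa [between_adj, hv] using hw

lemma sum_degree_eq_card_edgeFinset_between [DecidableEq V] (hs : G.IsIndepSet s) :
    ∑ v ∈ s, G.degree v = #(G.between s ↑sᶜ).edgeFinset := by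
  have hdisj : Disjoint (s : Set V) ↑sᶜ := disjoint_coe.2 disjoint_compl_right
  rw [← isBipartiteWith_sum_degrees_eq_card_edges (between_isBipartiteWith hdisj)]
  exact sum_congr rfl fun v hv ↦ (degree_between_compl hs hv).symm

lemma sum_degree_le_card_edgeFinset (hs : G.IsIndepSet s) :
    ∑ v ∈ s, G.degree v ≤ #G.edgeFinset := by
  classical
  rw [sum_degree_eq_card_edgeFinset_between hs]
  exact card_le_card (edgeFinset_mono between_le)

lemma isBipartiteWith_of_card_edgeFinset_le [DecidableEq V] (hs : G.IsIndepSet s)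
    (h : #G.edgeFinset ≤ ∑ v ∈ s, G.degree v) : G.IsBipartiteWith s ↑sᶜ := by
  classical
  rw [sum_degree_eq_card_edgeFinset_between hs] at h
  have heq : G.between s ↑sᶜ = G :=
    edgeFinset_inj.1 (eq_of_subset_of_card_le (edgeFinset_mono between_le) h)
  exact heq ▸ between_isBipartiteWith (disjoint_coe.2 disjoint_compl_right)

lemma card_mul_minDegree_pow_le_forgottenIndex (G : SimpleGraph V) [DecidableRel G.Adj] :
    (Fintype.card V : ℝ) * (G.minDegree : ℝ) ^ 3 ≤ forgottenIndex G := by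
  rw [← nsmul_eq_mul, ← card_univ]
  refine card_nsmul_le_sum _ _ _ fun v _ ↦ ?_
  gcongr
  exact G.minDegree_le_degree v

lemma isRegularOfDegree_of_forgottenIndex_le
    (h : forgottenIndex G ≤ (Fintype.card V : ℝ) * (G.minDegree : ℝ) ^ 3) :
    G.IsRegularOfDegree G.minDegree := by
  have hge : ∀ v ∈ univ, (G.minDegree : ℝ) ^ 3 ≤ (G.degree v : ℝ) ^ 3 := fun v _ ↦ by
    gcongr
    exact G.minDegree_le_degree v
  rw [← nsmul_eq_mul, ← card_univ, ← sum_const] at h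
  have heq := (sum_eq_sum_iff_of_le hge).1 (le_antisymm (sum_le_sum hge) h)
  intro v
  have hv := (pow_left_inj₀ (Nat.cast_nonneg _) (Nat.cast_nonneg _) three_ne_zero).1
    (heq v (mem_univ v))
  exact_mod_cast hv.symm

lemma forgottenIndex_bound_eq {n k d e : ℝ} (hk : k + 1 ≠ 0) :
    (n - k - 1) * d ^ 3 + d * (2 * (k + 1) ^ 2 * d ^ 2 - e ^ 2) / (k + 1) =
      n * d ^ 3 + d / (k + 1) * (((k + 1) * d) ^ 2 - e ^ 2) := by
  field_simp
  ring

lemma card_edgeFinset_le_of_forgottenIndex_le {a c : ℝ} (ha : 0 ≤ a) (hc : 0 < c)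
    (h : forgottenIndex G ≤ (Fintype.card V : ℝ) * (G.minDegree : ℝ) ^ 3 +
      c * (a ^ 2 - (#G.edgeFinset : ℝ) ^ 2)) : (#G.edgeFinset : ℝ) ≤ a := by
  have hnonneg : 0 ≤ c * (a ^ 2 - (#G.edgeFinset : ℝ) ^ 2) := by
    linarith [card_mul_minDegree_pow_le_forgottenIndex G]
  exact le_of_sq_le_sq (sub_nonneg.1 (nonneg_of_mul_nonneg_right hnonneg hc)) ha

end Counting

end

/-- If `G` is a `k`-connected (`k ≥ 2`) graph with `n ≥ 3` vertices, `e` edges, and minimum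
degree `δ`, and `F(G) ≤ (n − k − 1)δ³ + δ(2(k+1)²δ² − e²)/(k+1)`, then `G` is Hamiltonian. -/
theorem stmt7 {V : Type*} [Fintype V] [DecidableEq V] (G : SimpleGraph V) [DecidableRel G.Adj]
    (k : ℕ) (hk : 2 ≤ k) (hconn : IsKConnected G k) (hn : 3 ≤ Fintype.card V)
    (h : forgottenIndex G ≤ ((Fintype.card V : ℝ) - k - 1) * (G.minDegree : ℝ) ^ 3
        + (G.minDegree : ℝ) * (2 * ((k : ℝ) + 1) ^ 2 * (G.minDegree : ℝ) ^ 2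
            - (G.edgeFinset.card : ℝ) ^ 2) / ((k : ℝ) + 1)) :
    G.IsHamiltonian := by
  by_contra hham
  obtain ⟨I, hI⟩ := hconn.exists_isNIndepSet (by omega) hn hham
  have hkδ : k ≤ G.minDegree := hconn.le_minDegree
  have hle : (k + 1) * G.minDegree ≤ ∑ v ∈ I, G.degree v := by
    rw [← hI.card_eq, ← smul_eq_mul]
    exact card_nsmul_le_sum _ _ _ fun v _ ↦ G.minDegree_le_degree v
  have hsum := sum_degree_le_card_edgeFinset hI.isIndepSet
  rw [forgottenIndex_bound_eq (by positivity)] at h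
  have he : #G.edgeFinset ≤ (k + 1) * G.minDegree := by
    have hδ : (0 : ℝ) < G.minDegree := by exact_mod_cast (by omega : 0 < G.minDegree)
    exact_mod_cast card_edgeFinset_le_of_forgottenIndex_le (by positivity) (by positivity) h
  have heq : (#G.edgeFinset : ℝ) = (k + 1) * G.minDegree := by
    exact_mod_cast he.antisymm (hle.trans hsum)
  rw [heq, sub_self, mul_zero, add_zero] at h
  have hreg : G.IsRegularOfDegree G.minDegree := isRegularOfDegree_of_forgottenIndex_le h
  have hbip : G.IsBipartiteWith I ↑Iᶜ :=
    isBipartiteWith_of_card_edgeFinset_le hI.isIndepSet (he.trans hle)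
  refine hham (isHamiltonian_of_isBipartiteWith hbip (by rw [hI.card_eq]; omega)
    (card_eq_card_of_isRegularOfDegree hbip hreg (by omega)).symm fun a _ b _ _ ↦ ?_)
  rw [hI.card_eq, hreg a, hreg b]
  omega
end
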